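/- Compactness for the rescaled discrete Perona–Malik functional: let (a,b) ⊂ ℝ be a bounded interval and p ∈ [1,+∞). Let {n_k} be a sequence of integers with n_k → +∞, and let u_k ∈ PC_{δ(n_k)}(a,b) be functions such that sup_k { RDPM_{n_k}((a,b),u_k) + ‖u_k‖_{L^∞} } < +∞. Then there exist a subsequence {k_h} and a step function u ∈ S((a,b)) such that u_{k_h} → u in L^p((a,b)). -/

import Mathlib

/-!
On each grid cell the integrand is constant, so the energy of `u` is `δ ∑ log (1 + (d_z/δ)²)`, where
`d_z` is the jump of `u` at the grid point `zδ`. Since `ω(n)² = δ(n) log n` and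
`log n ≤ 3 log (1/δ(n))`, an energy bound `C` turns into `∑ log (1 + (d_z/δ)²) ≤ 3C log (1/δ)`.
Split the jumps at the threshold `√δ`.

* A jump above `√δ` costs at least `log (1/δ)`, so there are at most `3C` of them.
* A jump below `√δ` satisfies `|d_z| ≤ √δ (δ + 2 log (1 + (d_z/δ)²))`, so the total variation of
  these jumps is `O(√δ log (1/δ))`, which tends to `0`.

Hence `u` is uniformly close to a step function with boundedly many jumps, whose positions and
heights range over a compact box. These parameters converge along a subsequence, so the step
functions converge pointwise off the finitely many limiting jump points, and dominated convergence
gives convergence in every `L^p`.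
-/

open MeasureTheory Filter Set

namespace PeronaMalik

/-- `a_{δ,*} = δ⌊a/δ⌋`, the lower `δ`-approximation of `a`. -/
noncomputable def lowGrid (δ a : ℝ) : ℝ := δ * (⌊a / δ⌋ : ℤ)

/-- `b_δ^* = δ⌈b/δ⌉`, the upper `δ`-approximation of `b`. -/
noncomputable def highGrid (δ b : ℝ) : ℝ := δ * (⌈b / δ⌉ : ℤ)

/-- `u` is piecewise constant at scale `δ`: constant on every interval `[zδ, (z+1)δ)`. -/
def IsPC (δ : ℝ) (u : ℝ → ℝ) : Prop :=
  ∀ z : ℤ, ∀ x ∈ Set.Ico ((z : ℝ) * δ) (((z : ℝ) + 1) * δ), u x = u ((z : ℝ) * δ)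

/-- Discrete derivative `D^δ u (x) = (u(x+δ) - u(x))/δ`. -/
noncomputable def Dd (δ : ℝ) (u : ℝ → ℝ) (x : ℝ) : ℝ := (u (x + δ) - u x) / δ

/-- The discrete Perona–Malik functional with fidelity term on `(a,b)`. -/
noncomputable def DPMF (n : ℕ) (β : ℝ) (f : ℝ → ℝ) (a b : ℝ) (u : ℝ → ℝ) : ℝ :=
  (∫ x in lowGrid (1 / (n : ℝ)) a..(highGrid (1 / (n : ℝ)) b - 1 / (n : ℝ)),
      Real.log (1 + (Dd (1 / (n : ℝ)) u x) ^ 2)) +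
    β * ∫ x in a..b, (u x - f x) ^ 2

/-- `u` is a minimizer of `DPMF n β f (0,1)` over `PC_{1/n}(0,1)`. -/
def IsMinimizer (n : ℕ) (β : ℝ) (f : ℝ → ℝ) (u : ℝ → ℝ) : Prop :=
  IsPC (1 / (n : ℝ)) u ∧
    ∀ v : ℝ → ℝ, IsPC (1 / (n : ℝ)) v → DPMF n β f 0 1 u ≤ DPMF n β f 0 1 v

/-- `m(n,β,f)`, the minimum value of the discrete Perona–Malik functional. -/
noncomputable def mval (n : ℕ) (β : ℝ) (f : ℝ → ℝ) : ℝ :=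
  sInf ((fun u => DPMF n β f 0 1 u) '' {u | IsPC (1 / (n : ℝ)) u})

/-- `ω(n) = (log n / n)^{1/3}`. -/
noncomputable def omg (n : ℕ) : ℝ := (Real.log n / n) ^ ((1 : ℝ) / 3)

/-- `δ(n) = 1/(n ω(n))`. -/
noncomputable def dlt (n : ℕ) : ℝ := 1 / ((n : ℝ) * omg n)

/-- The rescaled discrete Perona–Malik functional. -/
noncomputable def RDPM (n : ℕ) (a b : ℝ) (u : ℝ → ℝ) : ℝ :=
  (1 / omg n ^ 2) *
    ∫ x in lowGrid (dlt n) a..(highGrid (dlt n) b - dlt n),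
      Real.log (1 + (Dd (dlt n) u x) ^ 2)

/-- The rescaled discrete Perona–Malik functional with fidelity term. -/
noncomputable def RDPMF (n : ℕ) (β : ℝ) (f : ℝ → ℝ) (a b : ℝ) (u : ℝ → ℝ) : ℝ :=
  RDPM n a b u + β * ∫ x in Set.Ioo a b, (u x - f x) ^ 2

/-- `u` is a step function with finitely many jumps on `(a,b)`. -/
def IsStep (a b : ℝ) (u : ℝ → ℝ) : Prop :=
  ∃ (s : Finset ℝ) (c : ℝ) (J : ℝ → ℝ),
    (∀ p ∈ s, p ∈ Set.Ioo a b ∧ J p ≠ 0) ∧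
    ∀ x ∈ Set.Ioo a b, u x = c + ∑ p ∈ s, (if p ≤ x then J p else 0)

/-- The set of jump (discontinuity) points of `u` inside `(a,b)`. -/
def jumpSet (a b : ℝ) (u : ℝ → ℝ) : Set ℝ :=
  {x ∈ Set.Ioo a b | ¬ ContinuousAt u x}

/-- The limit functional `JF(α,β,f,(a,b),u) = α·#jumps + β∫(u-f)²`. -/
noncomputable def JF (α β : ℝ) (f : ℝ → ℝ) (a b : ℝ) (u : ℝ → ℝ) : ℝ :=
  α * ((jumpSet a b u).ncard : ℝ) + β * ∫ x in Set.Ioo a b, (u x - f x) ^ 2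

/-- Strict convergence in `BV((a,b))`: `L¹` convergence plus convergence of
total variations. -/
def StrictBV (useq : ℕ → ℝ → ℝ) (u : ℝ → ℝ) (a b : ℝ) : Prop :=
  Tendsto (fun k => ∫ x in Set.Ioo a b, |useq k x - u x|) atTop (nhds 0) ∧
  Tendsto (fun k => eVariationOn (useq k) (Set.Ioo a b)) atTop
    (nhds (eVariationOn u (Set.Ioo a b)))

/-- Locally strict convergence in `BV_loc(ℝ)`: strict convergence on every bounded
interval whose endpoints are not jump points of the limit. -/
def LocStrictBV (useq : ℕ → ℝ → ℝ) (u : ℝ → ℝ) : Prop :=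
  ∀ a b : ℝ, a < b → ContinuousAt u a → ContinuousAt u b → StrictBV useq u a b

/-- `S(x) = 2⌊(x+1)/2⌋`. -/
noncomputable def stairS (x : ℝ) : ℝ := 2 * (⌊(x + 1) / 2⌋ : ℤ)

/-- The canonical `(H,V)`-staircase `S_{H,V}(x) = V·S(x/H)`. -/
noncomputable def canStair (H V : ℝ) (x : ℝ) : ℝ := V * stairS (x / H)

/-- Oblique translations of the canonical `(H,V)`-staircase. -/
def Obl (H V : ℝ) (v : ℝ → ℝ) : Prop :=
  ∃ τ ∈ Set.Icc (-1 : ℝ) 1, ∀ x, v x = canStair H V (x - H * τ) + V * τ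

/-- Graph translations of horizontal type of the canonical `(H,V)`-staircase. -/
def Orz (H V : ℝ) (v : ℝ → ℝ) : Prop :=
  ∃ τ ∈ Set.Icc (-1 : ℝ) 1, ∀ x, v x = canStair H V (x - H * τ)

/-- `μ_n(β,L,M)`: minimum of the rescaled functional with affine forcing term. -/
noncomputable def muDisc (n : ℕ) (β L M : ℝ) : ℝ :=
  sInf ((fun u => RDPMF n β (fun x => M * x) 0 L u) '' {u | IsPC (dlt n) u})

/-- `μ*_n(β,L,M)`: same as `μ_n` but with boundary conditions `u(0)=0`, `u(L^*)=ML`. -/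
noncomputable def muDiscStar (n : ℕ) (β L M : ℝ) : ℝ :=
  sInf ((fun u => RDPMF n β (fun x => M * x) 0 L u) ''
    {u | IsPC (dlt n) u ∧ u 0 = 0 ∧ u (highGrid (dlt n) L - dlt n) = M * L})

/-- `μ(α,β,L,M)`: minimum of the limit functional with affine forcing term. -/
noncomputable def muLim (α β L M : ℝ) : ℝ :=
  sInf ((fun u => JF α β (fun x => M * x) 0 L u) '' {u | IsStep 0 L u})

/-- `μ*(α,β,L,M)`: same as `μ` but with boundary values `u(0⁺)=0`, `u(L⁻)=ML`. -/
noncomputable def muLimStar (α β L M : ℝ) : ℝ :=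
  sInf ((fun u => JF α β (fun x => M * x) 0 L u) ''
    {u | IsStep 0 L u ∧ Tendsto u (nhdsWithin 0 (Set.Ioi 0)) (nhds 0) ∧
         Tendsto u (nhdsWithin L (Set.Iio L)) (nhds (M * L))})

/-- `u` and `v` have the same boundary values `u(a⁺)=v(a⁺)`, `u(b⁻)=v(b⁻)`. -/
def SameBdry (a b : ℝ) (u v : ℝ → ℝ) : Prop :=
  (∀ c : ℝ, Tendsto v (nhdsWithin a (Set.Ioi a)) (nhds c) →
     Tendsto u (nhdsWithin a (Set.Ioi a)) (nhds c)) ∧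
  (∀ c : ℝ, Tendsto v (nhdsWithin b (Set.Iio b)) (nhds c) →
     Tendsto u (nhdsWithin b (Set.Iio b)) (nhds c))

/-- `v` is a local minimizer for `JF(α,β,f,(a,b),·)` among step functions with the
same boundary values. -/
def IsLocalMinJF (α β : ℝ) (f : ℝ → ℝ) (a b : ℝ) (v : ℝ → ℝ) : Prop :=
  IsStep a b v ∧
  ∀ u : ℝ → ℝ, IsStep a b u → SameBdry a b u v → JF α β f a b v ≤ JF α β f a b u

/-- `v` is an entire local minimizer for `JF(α,β,f,·,·)`. -/
def IsEntireLocalMinJF (α β : ℝ) (f : ℝ → ℝ) (v : ℝ → ℝ) : Prop :=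
  ∀ a b : ℝ, a < b → IsLocalMinJF α β f a b v

/-- `v` is a local minimizer for `RDPMF_n(β,f,(a,b),·)` among piecewise constant
functions with the same boundary values. -/
def IsLocalMinRDPMF (n : ℕ) (β : ℝ) (f : ℝ → ℝ) (a b : ℝ) (v : ℝ → ℝ) : Prop :=
  IsPC (dlt n) v ∧
  ∀ u : ℝ → ℝ, IsPC (dlt n) u →
    u (lowGrid (dlt n) a) = v (lowGrid (dlt n) a) →
    u (highGrid (dlt n) b - dlt n) = v (highGrid (dlt n) b - dlt n) →
    RDPMF n β f a b v ≤ RDPMF n β f a b u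

open scoped Topology

/-! ### Step functions -/

section StepFun

variable {ι κ : Type*}

/-- The right-continuous step function with value `c` at `-∞` and a jump of height `J i` at `t i`
for each `i ∈ s`. Jumps may coincide, vanish or lie anywhere, so that, for fixed `s`, these
functions are closed under limits of the parameters `c`, `t` and `J`. -/
noncomputable def stepFun (s : Finset ι) (c : ℝ) (t J : ι → ℝ) (x : ℝ) : ℝ :=
  c + ∑ i ∈ s, if t i ≤ x then J i else 0

lemma stepFun_merge (s : Finset ι) (c : ℝ) (t J : ι → ℝ) :
    stepFun (s.image t) c id (fun q => ∑ i ∈ s with t i = q, J i) = stepFun s c t J := by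
  funext x
  refine congrArg (c + ·) ?_
  rw [← Finset.sum_fiberwise_of_maps_to fun i hi => Finset.mem_image_of_mem t hi]
  refine Finset.sum_congr rfl fun q _ => ?_
  have hfiber : ∀ i ∈ s.filter (t · = q), (if t i ≤ x then J i else 0) = if q ≤ x then J i else 0 :=
    fun i hi => by rw [(Finset.mem_filter.1 hi).2]
  rw [Finset.sum_congr rfl hfiber]
  by_cases hqx : q ≤ x <;> simp [hqx]

lemma isStep_stepFun (a b : ℝ) (s : Finset ι) (c : ℝ) (t J : ι → ℝ) :
    IsStep a b (stepFun s c t J) := by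
  rw [← stepFun_merge]
  set T := s.image t
  set K : ℝ → ℝ := fun q => ∑ i ∈ s with t i = q, J i
  -- Jumps at or before `a` go into the constant; those at or after `b` are invisible on `(a, b)`.
  refine ⟨T.filter fun q => q ∈ Ioo a b ∧ K q ≠ 0, c + ∑ q ∈ T, if q ≤ a then K q else 0, K,
    fun q hq => (Finset.mem_filter.1 hq).2, fun x hx => ?_⟩
  simp only [stepFun, id, Finset.sum_filter, add_assoc, ← Finset.sum_add_distrib]
  refine congrArg (c + ·) (Finset.sum_congr rfl fun q _ => ?_)
  obtain ⟨hax, hxb⟩ := hx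
  grind

/-- Padding with null jumps lets a family of at most `card κ` jumps be indexed by `κ`. -/
lemma exists_stepFun_univ_eq [Fintype κ] {s : Finset ι} (hcard : s.card ≤ Fintype.card κ)
    {T R : Set ℝ} (hT : T.Nonempty) (hR : 0 ∈ R) {t J : ι → ℝ} (ht : ∀ i ∈ s, t i ∈ T)
    (hJ : ∀ i ∈ s, J i ∈ R) (c : ℝ) :
    ∃ t' J' : κ → ℝ, (∀ i, t' i ∈ T) ∧ (∀ i, J' i ∈ R) ∧
      stepFun Finset.univ c t' J' = stepFun s c t J := by
  classical
  obtain ⟨e⟩ : Nonempty (s ↪ κ) :=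
    Function.Embedding.nonempty_of_card_le (by rwa [Fintype.card_coe])
  obtain ⟨τ, hτ⟩ := hT
  refine ⟨Function.extend e (fun i => t i) fun _ => τ, Function.extend e (fun i => J i) fun _ => 0,
    fun i => ?_, fun i => ?_, funext fun x => congrArg (c + ·) ?_⟩
  · by_cases hi : ∃ j, e j = i
    · obtain ⟨j, rfl⟩ := hi
      simpa only [e.injective.extend_apply] using ht j j.2
    · rwa [Function.extend_apply' _ _ _ hi]
  · by_cases hi : ∃ j, e j = i
    · obtain ⟨j, rfl⟩ := hi
      simpa only [e.injective.extend_apply] using hJ j j.2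
    · rwa [Function.extend_apply' _ _ _ hi]
  · rw [← Finset.sum_coe_sort s]
    refine (Fintype.sum_of_injective e e.injective _ _ (fun i hi => ?_) fun i => ?_).symm
    · rw [Function.extend_apply' (fun j : s => J j) _ _ hi, ite_self]
    · simp only [e.injective.extend_apply]

lemma tendsto_stepFun {α : Type*} {l : Filter α} {s : Finset ι} {c : α → ℝ} {t J : α → ι → ℝ}
    {c₀ : ℝ} {t₀ J₀ : ι → ℝ} (hc : Tendsto c l (𝓝 c₀)) (ht : Tendsto t l (𝓝 t₀))
    (hJ : Tendsto J l (𝓝 J₀)) {x : ℝ} (hx : x ∉ range t₀) :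
    Tendsto (fun k => stepFun s (c k) (t k) (J k) x) l (𝓝 (stepFun s c₀ t₀ J₀ x)) := by
  refine hc.add (tendsto_finsetSum _ fun i _ => ?_)
  have hti := tendsto_pi_nhds.1 ht i
  rcases lt_or_gt_of_ne fun h : t₀ i = x => hx ⟨i, h⟩ with h | h
  · rw [if_pos h.le]
    refine (tendsto_pi_nhds.1 hJ i).congr' ?_
    filter_upwards [hti.eventually_le_const h] with k hk
    rw [if_pos hk]
  · rw [if_neg h.not_ge]
    refine tendsto_const_nhds.congr' ?_
    filter_upwards [hti.eventually_const_lt h] with k hk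
    rw [if_neg hk.not_ge]

end StepFun

/-! ### The logarithmic cost of small and large increments -/

section Increments

variable {ι : Type*} {δ : ℝ}

lemma half_le_log_one_add {y : ℝ} (hy0 : 0 ≤ y) (hy1 : y ≤ 1) : y / 2 ≤ Real.log (1 + y) := by
  refine le_trans ?_ (Real.le_log_one_add_of_nonneg hy0)
  rw [div_le_div_iff₀ two_pos (by positivity)]
  nlinarith

lemma log_one_add_sq_nonneg (y : ℝ) : 0 ≤ Real.log (1 + y ^ 2) :=
  Real.log_nonneg (le_add_of_nonneg_right (sq_nonneg y))

lemma abs_le_of_abs_le_sqrt (hδ : 0 < δ) {d : ℝ} (hd : |d| ≤ √δ) :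
    |d| ≤ √δ * (δ + 2 * Real.log (1 + (d / δ) ^ 2)) := by
  have hsq : √δ ^ 2 = δ := Real.sq_sqrt hδ.le
  obtain ⟨e, he⟩ : ∃ e, e = |d| / δ := ⟨_, rfl⟩
  have hde : |d| = √δ ^ 2 * e := by rw [hsq, he, mul_div_cancel₀ _ hδ.ne']
  have he2 : (d / δ) ^ 2 = e ^ 2 := by rw [he, div_pow, div_pow, sq_abs]
  rw [he2]
  rcases le_total (e ^ 2) 1 with h | h
  · have hlog := half_le_log_one_add (sq_nonneg e) h
    calc |d| ≤ √δ * (√δ ^ 2 + e ^ 2) := by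
          rw [hde]
          nlinarith [mul_nonneg (Real.sqrt_nonneg δ) (sq_nonneg (√δ - e)),
            mul_nonneg (Real.sqrt_nonneg δ) (add_nonneg (sq_nonneg √δ) (sq_nonneg e))]
      _ ≤ √δ * (δ + 2 * Real.log (1 + e ^ 2)) := by
          rw [hsq]
          gcongr
          linarith
  · have hlog : 1 / 2 ≤ Real.log (1 + e ^ 2) :=
      (half_le_log_one_add zero_le_one le_rfl).trans (Real.log_le_log (by norm_num) (by linarith))
    calc |d| ≤ √δ * 1 := by rwa [mul_one]
      _ ≤ √δ * (δ + 2 * Real.log (1 + e ^ 2)) := by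
          gcongr
          linarith

lemma sum_small_increments_le (hδ : 0 < δ) (s : Finset ι) (d : ι → ℝ) :
    ∑ i ∈ s with |d i| ≤ √δ, |d i| ≤
      √δ * (s.card * δ + 2 * ∑ i ∈ s, Real.log (1 + (d i / δ) ^ 2)) :=
  calc ∑ i ∈ s with |d i| ≤ √δ, |d i|
      ≤ ∑ i ∈ s with |d i| ≤ √δ, √δ * (δ + 2 * Real.log (1 + (d i / δ) ^ 2)) :=
        Finset.sum_le_sum fun i hi => abs_le_of_abs_le_sqrt hδ (Finset.mem_filter.1 hi).2
    _ ≤ ∑ i ∈ s, √δ * (δ + 2 * Real.log (1 + (d i / δ) ^ 2)) :=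
        Finset.sum_le_sum_of_subset_of_nonneg (Finset.filter_subset _ _) fun i _ _ => by
          have := log_one_add_sq_nonneg (d i / δ)
          positivity
    _ = √δ * (s.card * δ + 2 * ∑ i ∈ s, Real.log (1 + (d i / δ) ^ 2)) := by
        rw [← Finset.mul_sum, Finset.sum_add_distrib, ← Finset.mul_sum, Finset.sum_const,
          nsmul_eq_mul]

lemma card_large_increments_mul_log_le (hδ : 0 < δ) (s : Finset ι) (d : ι → ℝ) :
    (s.filter fun i => ¬|d i| ≤ √δ).card * Real.log δ⁻¹ ≤
      ∑ i ∈ s, Real.log (1 + (d i / δ) ^ 2) := by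
  rw [← nsmul_eq_mul]
  refine (Finset.card_nsmul_le_sum _ (fun i => Real.log (1 + (d i / δ) ^ 2)) _ fun i hi => ?_).trans
    (Finset.sum_le_sum_of_subset_of_nonneg (Finset.filter_subset _ _) fun i _ _ =>
      log_one_add_sq_nonneg _)
  have hlarge : δ ≤ d i ^ 2 := by
    rw [← sq_abs, ← Real.sq_sqrt hδ.le]
    exact pow_le_pow_left₀ (Real.sqrt_nonneg δ) (not_le.1 (Finset.mem_filter.1 hi).2).le 2
  refine Real.log_le_log (inv_pos.2 hδ) (le_add_of_nonneg_of_le zero_le_one ?_)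
  rw [div_pow, le_div_iff₀ (by positivity), sq, inv_mul_cancel_left₀ hδ.ne']
  exact hlarge

lemma tendsto_sqrt_mul_add_log_inv (A B : ℝ) :
    Tendsto (fun δ : ℝ => √δ * (A + δ + B * Real.log δ⁻¹)) (𝓝[>] 0) (𝓝 0) := by
  have hsqrt : Tendsto (fun δ : ℝ => √δ * (A + δ)) (𝓝[>] 0) (𝓝 0) := by
    have hcont : Continuous fun δ : ℝ => √δ * (A + δ) := by fun_prop
    simpa using (hcont.tendsto 0).mono_left nhdsWithin_le_nhds
  have hlog : Tendsto (fun δ : ℝ => -B * (Real.log δ * √δ)) (𝓝[>] 0) (𝓝 0) := by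
    simpa only [Real.sqrt_eq_rpow, mul_zero] using
      (tendsto_log_mul_rpow_nhdsGT_zero one_half_pos).const_mul (-B)
  have hsum := hsqrt.add hlog
  rw [add_zero] at hsum
  refine hsum.congr fun δ => ?_
  rw [Real.log_inv]
  ring

end Increments

/-! ### Piecewise constant functions on a grid -/

section Grid

variable {δ a b : ℝ} {u : ℝ → ℝ}

lemma floor_div_mul_le (hδ : 0 < δ) (x : ℝ) : (⌊x / δ⌋ : ℝ) * δ ≤ x :=
  (le_div_iff₀ hδ).1 (Int.floor_le _)

lemma lt_floor_div_add_one_mul (hδ : 0 < δ) (x : ℝ) : x < ((⌊x / δ⌋ : ℝ) + 1) * δ :=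
  (div_lt_iff₀ hδ).1 (Int.lt_floor_add_one _)

lemma lowGrid_le (hδ : 0 < δ) (a : ℝ) : lowGrid δ a ≤ a :=
  (mul_comm _ _).trans_le (floor_div_mul_le hδ a)

lemma le_highGrid (hδ : 0 < δ) (b : ℝ) : b ≤ highGrid δ b :=
  ((div_le_iff₀ hδ).1 (Int.le_ceil _)).trans_eq (mul_comm _ _)

lemma Ioo_subset_Icc_grid (hδ : 0 < δ) (a b : ℝ) :
    Ioo a b ⊆ Icc (lowGrid δ a) (highGrid δ b) :=
  Ioo_subset_Icc_self.trans (Icc_subset_Icc (lowGrid_le hδ a) (le_highGrid hδ b))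

lemma IsPC.eq_floor (hδ : 0 < δ) (hu : IsPC δ u) (x : ℝ) : u x = u (⌊x / δ⌋ * δ) :=
  hu _ x ⟨floor_div_mul_le hδ x, lt_floor_div_add_one_mul hδ x⟩

lemma IsPC.measurable (hδ : 0 < δ) (hu : IsPC δ u) : Measurable u := by
  have hfactor : u = (fun z : ℤ => u (z * δ)) ∘ fun x => ⌊x / δ⌋ := funext (hu.eq_floor hδ)
  rw [hfactor]
  exact measurable_from_top.comp (Int.measurable_floor.comp (measurable_id.div_const δ))

lemma IsPC.comp (hu : IsPC δ u) (f : ℝ → ℝ) : IsPC δ (f ∘ u) :=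
  fun z x hx => congrArg f (hu z x hx)

lemma IsPC.dd (hu : IsPC δ u) : IsPC δ (Dd δ u) := fun z x ⟨hx₁, hx₂⟩ => by
  have hshift : ∀ y ∈ Ico (z * δ) ((z + 1) * δ), u (y + δ) = u ((z + 1 : ℤ) * δ) :=
    fun y ⟨hy₁, hy₂⟩ => hu (z + 1) _ ⟨by push_cast; linarith, by push_cast; linarith⟩
  rw [Dd, Dd, hu z x ⟨hx₁, hx₂⟩, hshift x ⟨hx₁, hx₂⟩,
    hshift (z * δ) ⟨le_rfl, hx₁.trans_lt hx₂⟩]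

lemma IsPC.integral_cell (hδ : 0 < δ) (hu : IsPC δ u) (z : ℤ) :
    IntervalIntegrable u volume (z * δ) ((z + 1) * δ) ∧
      ∫ x in (z * δ)..((z + 1) * δ), u x = δ * u (z * δ) := by
  have hle : z * δ ≤ (z + 1) * δ := by linarith
  have hconst : EqOn (fun _ => u (z * δ)) u (Ioo (z * δ) ((z + 1) * δ)) :=
    fun x hx => (hu z x (Ioo_subset_Ico_self hx)).symm
  constructor
  · exact intervalIntegrable_const.congr_uIoo (by rwa [uIoo_of_le hle])
  · rw [← intervalIntegral.integral_congr_Ioo_of_le hle hconst, intervalIntegral.integral_const,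
      smul_eq_mul]
    ring

lemma IsPC.integral_eq_sum (hδ : 0 < δ) (hu : IsPC δ u) {m n : ℤ} (hmn : m ≤ n) :
    IntervalIntegrable u volume (m * δ) (n * δ) ∧
      ∫ x in (m * δ)..(n * δ), u x = δ * ∑ z ∈ Finset.Ioc m n, u ((z - 1) * δ) := by
  induction n, hmn using Int.leInduction with
  | base => simp
  | succ n hmn ih =>
    obtain ⟨hint, hsum⟩ := ih
    obtain ⟨hint_cell, hcell⟩ := hu.integral_cell hδ n
    push_cast
    refine ⟨hint.trans hint_cell, ?_⟩
    rw [← intervalIntegral.integral_add_adjacent_intervals hint hint_cell, hsum, hcell,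
      ← Finset.insert_Ioc_right_eq_Ioc_add_one hmn, Finset.sum_insert (by simp)]
    push_cast
    rw [add_sub_cancel_right]
    ring

/-- The integers `z` whose grid point `z * δ` lies in `(a, b)`. -/
noncomputable def gridNodes (δ a b : ℝ) : Finset ℤ := Finset.Ioo ⌊a / δ⌋ ⌈b / δ⌉

lemma mem_gridNodes (hδ : 0 < δ) {z : ℤ} : z ∈ gridNodes δ a b ↔ z * δ ∈ Ioo a b := by
  rw [gridNodes, Finset.mem_Ioo, Int.floor_lt, Int.lt_ceil, div_lt_iff₀ hδ, lt_div_iff₀ hδ, mem_Ioo]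

lemma floor_div_lt_ceil_div (hδ : 0 < δ) (hab : a < b) : ⌊a / δ⌋ < ⌈b / δ⌉ :=
  Int.cast_lt.1 <| (Int.floor_le _).trans_lt <|
    ((div_lt_div_iff_of_pos_right hδ).2 hab).trans_le (Int.le_ceil _)

lemma card_gridNodes_mul_le (hδ : 0 < δ) (hab : a < b) :
    (gridNodes δ a b).card * δ ≤ b - a + δ := by
  have hcard : ((gridNodes δ a b).card : ℝ) = ⌈b / δ⌉ - ⌊a / δ⌋ - 1 := by
    have := Int.card_Ioo_of_lt _ _ (floor_div_lt_ceil_div hδ hab)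
    rw [gridNodes]
    exact_mod_cast this
  have hceil : (⌈b / δ⌉ - 1 : ℝ) * δ < b := by
    rw [← lt_div_iff₀ hδ]
    linarith [Int.ceil_lt_add_one (b / δ)]
  rw [hcard]
  linarith [lt_floor_div_add_one_mul hδ a]

/-- The jump of a function of `PC_δ` at the grid point `z * δ`. -/
noncomputable def gridJump (δ : ℝ) (u : ℝ → ℝ) (z : ℤ) : ℝ := u (z * δ) - u ((z - 1) * δ)

lemma sum_gridJump (δ : ℝ) (u : ℝ → ℝ) {m n : ℤ} (hmn : m ≤ n) :
    ∑ z ∈ Finset.Ioc m n, gridJump δ u z = u (n * δ) - u (m * δ) := by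
  induction n, hmn using Int.leInduction with
  | base => simp
  | succ n hmn ih =>
    rw [← Finset.insert_Ioc_right_eq_Ioc_add_one hmn, Finset.sum_insert (by simp), ih, gridJump]
    push_cast
    rw [add_sub_cancel_right]
    ring

lemma IsPC.eq_stepFun (hδ : 0 < δ) (hu : IsPC δ u) {x : ℝ} (hx : x ∈ Ioo a b) :
    u x = stepFun (gridNodes δ a b) (u (⌊a / δ⌋ * δ)) (fun z => z * δ) (gridJump δ u) x := by
  have hfloor : ⌊a / δ⌋ ≤ ⌊x / δ⌋ :=
    Int.floor_le_floor (div_le_div_of_nonneg_right hx.1.le hδ.le)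
  have hceil : ⌊x / δ⌋ < ⌈b / δ⌉ := floor_div_lt_ceil_div hδ hx.2
  have hnodes : (gridNodes δ a b).filter (fun z : ℤ => z * δ ≤ x) =
      Finset.Ioc ⌊a / δ⌋ ⌊x / δ⌋ := by
    ext z
    rw [Finset.mem_filter, gridNodes, Finset.mem_Ioo, Finset.mem_Ioc, ← le_div_iff₀ hδ,
      ← Int.le_floor]
    omega
  rw [stepFun, ← Finset.sum_filter, hnodes, sum_gridJump δ u hfloor, add_sub_cancel,
    hu.eq_floor hδ x]

lemma IsPC.abs_sub_stepFun_large_jumps_le (hδ : 0 < δ) (hu : IsPC δ u) (r : ℝ) {x : ℝ}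
    (hx : x ∈ Ioo a b) :
    |u x - stepFun ((gridNodes δ a b).filter fun z => ¬|gridJump δ u z| ≤ r) (u (⌊a / δ⌋ * δ))
        (fun z => z * δ) (gridJump δ u) x| ≤
      ∑ z ∈ gridNodes δ a b with |gridJump δ u z| ≤ r, |gridJump δ u z| := by
  rw [hu.eq_stepFun hδ hx, stepFun, stepFun,
    ← Finset.sum_filter_add_sum_filter_not (gridNodes δ a b) (fun z => |gridJump δ u z| ≤ r),
    add_sub_add_left_eq_sub, add_sub_cancel_right]
  refine (Finset.abs_sum_le_sum_abs _ _).trans (Finset.sum_le_sum fun z _ => ?_)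
  split_ifs
  · exact le_rfl
  · exact abs_zero.trans_le (abs_nonneg _)

lemma IsPC.exists_mem_Ioo_eq (hδ : 0 < δ) (hab : a < b) (hu : IsPC δ u) {z : ℤ} (hzb : z * δ < b)
    (haz : a < (z + 1) * δ) : ∃ x ∈ Ioo a b, u x = u (z * δ) := by
  have hz : z * δ < (z + 1) * δ := by linarith
  obtain ⟨x, hx, hx'⟩ := exists_between (max_lt (lt_min hab haz) (lt_min hzb hz))
  obtain ⟨hax, hzx⟩ := max_lt_iff.1 hx
  obtain ⟨hxb, hxz⟩ := lt_min_iff.1 hx'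
  exact ⟨x, ⟨hax, hxb⟩, hu z x ⟨hzx.le, hxz⟩⟩

lemma IsPC.abs_gridJump_le (hδ : 0 < δ) (hab : a < b) (hu : IsPC δ u) {C : ℝ}
    (hC : ∀ x ∈ Ioo a b, |u x| ≤ C) {z : ℤ} (hz : z ∈ gridNodes δ a b) :
    |gridJump δ u z| ≤ 2 * C := by
  obtain ⟨haz, hzb⟩ := (mem_gridNodes hδ).1 hz
  obtain ⟨x, hx, hxz⟩ := hu.exists_mem_Ioo_eq hδ hab hzb (by linarith)
  obtain ⟨y, hy, hyz⟩ := hu.exists_mem_Ioo_eq hδ hab (z := z - 1) (by push_cast; linarith)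
    (by push_cast; linarith)
  push_cast at hyz
  rw [gridJump, ← hxz, ← hyz, two_mul]
  exact (abs_sub _ _).trans (add_le_add (hC x hx) (hC y hy))

/-- The discrete Perona–Malik energy of `u` on `(a, b)` at scale `δ`, before rescaling. -/
noncomputable def gridEnergy (δ a b : ℝ) (u : ℝ → ℝ) : ℝ :=
  ∫ x in lowGrid δ a..(highGrid δ b - δ), Real.log (1 + Dd δ u x ^ 2)

lemma IsPC.gridEnergy_eq_sum (hδ : 0 < δ) (hab : a < b) (hu : IsPC δ u) :
    gridEnergy δ a b u =
      δ * ∑ z ∈ gridNodes δ a b, Real.log (1 + (gridJump δ u z / δ) ^ 2) := by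
  have hlow : lowGrid δ a = (⌊a / δ⌋ : ℤ) * δ := mul_comm _ _
  have hhigh : highGrid δ b - δ = (⌈b / δ⌉ - 1 : ℤ) * δ := by
    rw [highGrid]
    push_cast
    ring
  have hmn : ⌊a / δ⌋ ≤ ⌈b / δ⌉ - 1 := Int.le_sub_one_of_lt (floor_div_lt_ceil_div hδ hab)
  rw [gridEnergy, hlow, hhigh]
  refine ((hu.dd.comp fun y => Real.log (1 + y ^ 2)).integral_eq_sum hδ hmn).2.trans ?_
  rw [Finset.Ioc_sub_one_right_eq_Ioo]
  refine congrArg (δ * ·) (Finset.sum_congr rfl fun z _ => ?_)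
  have hnext : ((z : ℝ) - 1) * δ + δ = z * δ := by ring
  rw [Function.comp_apply, Dd, hnext, gridJump]

end Grid

/-! ### Compactness -/

/-- Only the jumps above the threshold `√δ` are kept: the energy bounds their number by `E`, and
the total variation of the others by the right-hand side. -/
lemma IsPC.exists_stepFun_near {a b C E δ : ℝ} {M : ℕ} (hab : a < b) (hδ0 : 0 < δ) (hδ1 : δ < 1)
    (hEM : E ≤ M) {u : ℝ → ℝ} (hu : IsPC δ u)
    (henergy : gridEnergy δ a b u ≤ E * (δ * Real.log δ⁻¹)) (hC : ∀ x ∈ Ioo a b, |u x| ≤ C) :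
    ∃ c ∈ Icc (-C) C, ∃ t ∈ univ.pi fun _ : Fin M => Icc a b,
      ∃ J ∈ univ.pi fun _ : Fin M => Icc (-(2 * C)) (2 * C), ∀ x ∈ Ioo a b,
        |u x - stepFun Finset.univ c t J x| ≤ √δ * (b - a + δ + 2 * E * Real.log δ⁻¹) := by
  have hlog : 0 < Real.log δ⁻¹ := Real.log_pos ((one_lt_inv₀ hδ0).2 hδ1)
  have hsum : ∑ z ∈ gridNodes δ a b, Real.log (1 + (gridJump δ u z / δ) ^ 2) ≤
      E * Real.log δ⁻¹ := by
    rw [hu.gridEnergy_eq_sum hδ0 hab, mul_left_comm] at henergy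
    exact le_of_mul_le_mul_left henergy hδ0
  have hcard : ((gridNodes δ a b).filter fun z => ¬|gridJump δ u z| ≤ √δ).card ≤
      Fintype.card (Fin M) := by
    rw [Fintype.card_fin]
    exact_mod_cast (le_of_mul_le_mul_right
      ((card_large_increments_mul_log_le hδ0 _ _).trans hsum) hlog).trans hEM
  obtain ⟨x₀, hx₀, hux₀⟩ := hu.exists_mem_Ioo_eq hδ0 hab
    ((floor_div_mul_le hδ0 a).trans_lt hab) (lt_floor_div_add_one_mul hδ0 a)
  have hC₀ : |u (⌊a / δ⌋ * δ)| ≤ C := hux₀ ▸ hC x₀ hx₀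
  have hC_nonneg : 0 ≤ 2 * C := by linarith [(abs_nonneg _).trans hC₀]
  obtain ⟨t, J, ht, hJ, hstep⟩ := exists_stepFun_univ_eq hcard (nonempty_Icc.2 hab.le)
    (R := Icc (-(2 * C)) (2 * C)) ⟨neg_nonpos.2 hC_nonneg, hC_nonneg⟩
    (fun z hz => Ioo_subset_Icc_self ((mem_gridNodes hδ0).1 (Finset.mem_filter.1 hz).1))
    (fun z hz => abs_le.1 (hu.abs_gridJump_le hδ0 hab hC (Finset.mem_filter.1 hz).1))
    (u (⌊a / δ⌋ * δ))
  refine ⟨_, abs_le.1 hC₀, t, fun i _ => ht i, J, fun i _ => hJ i, fun x hx => ?_⟩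
  rw [hstep]
  refine (hu.abs_sub_stepFun_large_jumps_le hδ0 √δ hx).trans
    ((sum_small_increments_le hδ0 _ _).trans ?_)
  rw [mul_assoc 2]
  gcongr
  exact card_gridNodes_mul_le hδ0 hab

lemma exists_subseq_tendsto_stepFun {a b C : ℝ} {M : ℕ} {I : Set ℝ} {u : ℕ → ℝ → ℝ} {ε : ℕ → ℝ}
    (hε : Tendsto ε atTop (𝓝 0))
    (hu : ∀ᶠ k in atTop, ∃ c ∈ Icc (-C) C, ∃ t ∈ univ.pi fun _ : Fin M => Icc a b,
      ∃ J ∈ univ.pi fun _ : Fin M => Icc (-(2 * C)) (2 * C), ∀ x ∈ I,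
        |u k x - stepFun Finset.univ c t J x| ≤ ε k) :
    ∃ φ : ℕ → ℕ, StrictMono φ ∧ ∃ (c : ℝ) (t J : Fin M → ℝ), ∀ x ∈ I \ range t,
      Tendsto (fun h => u (φ h) x) atTop (𝓝 (stepFun Finset.univ c t J x)) := by
  obtain ⟨ψ, hψ, hnear⟩ := extraction_of_eventually_atTop hu
  choose c hc t ht J hJ hnear using hnear
  have hcompact : IsCompact (Icc (-C) C ×ˢ (univ.pi fun _ : Fin M => Icc a b) ×ˢ
      univ.pi fun _ : Fin M => Icc (-(2 * C)) (2 * C)) :=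
    isCompact_Icc.prod
      ((isCompact_univ_pi fun _ => isCompact_Icc).prod (isCompact_univ_pi fun _ => isCompact_Icc))
  obtain ⟨⟨c₀, t₀, J₀⟩, -, χ, hχ, hlim⟩ :=
    hcompact.tendsto_subseq (x := fun k => (c k, t k, J k)) fun k => ⟨hc k, ht k, hJ k⟩
  rw [nhds_prod_eq, nhds_prod_eq, tendsto_prod_iff', tendsto_prod_iff'] at hlim
  refine ⟨ψ ∘ χ, hψ.comp hχ, c₀, t₀, J₀, fun x hx => ?_⟩
  have hstep := tendsto_stepFun (s := Finset.univ) hlim.1 hlim.2.1 hlim.2.2 hx.2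
  have herror : Tendsto (fun h => u (ψ (χ h)) x -
      stepFun Finset.univ (c (χ h)) (t (χ h)) (J (χ h)) x) atTop (𝓝 0) :=
    squeeze_zero_norm (fun h => hnear (χ h) x hx.1) (hε.comp (hψ.comp hχ).tendsto_atTop)
  simpa using herror.add hstep

lemma tendsto_integral_norm_sub_rpow {α F : Type*} [MeasurableSpace α] {μ : Measure α}
    [IsFiniteMeasure μ] [NormedAddCommGroup F] {f : ℕ → α → F} {g : α → F} {C p : ℝ} (hp : 0 < p)
    (hf : ∀ k, AEStronglyMeasurable (f k) μ) (hC : ∀ k, ∀ᵐ x ∂μ, ‖f k x‖ ≤ C)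
    (hlim : ∀ᵐ x ∂μ, Tendsto (fun k => f k x) atTop (𝓝 (g x))) :
    Tendsto (fun k => ∫ x, ‖f k x - g x‖ ^ p ∂μ) atTop (𝓝 0) := by
  have hg : AEStronglyMeasurable g μ := aestronglyMeasurable_of_tendsto_ae atTop hf hlim
  have hpow : ∀ᵐ x ∂μ, Tendsto (fun k => ‖f k x - g x‖ ^ p) atTop (𝓝 0) := by
    filter_upwards [hlim] with x hx
    have hnorm := tendsto_iff_norm_sub_tendsto_zero.1 hx
    simpa only [Real.zero_rpow hp.ne'] using hnorm.rpow_const (Or.inr hp.le)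
  have hbound : ∀ k, ∀ᵐ x ∂μ, ‖‖f k x - g x‖ ^ p‖ ≤ (C + C) ^ p := fun k => by
    filter_upwards [ae_all_iff.2 hC, hlim] with x hCx hx
    have hgx : ‖g x‖ ≤ C := le_of_tendsto' hx.norm hCx
    rw [Real.norm_of_nonneg (by positivity)]
    gcongr
    exact (norm_sub_le _ _).trans (add_le_add (hCx k) hgx)
  have hmeas : ∀ k, AEStronglyMeasurable (fun x => ‖f k x - g x‖ ^ p) μ := fun k =>
    (((hf k).sub hg).norm.aemeasurable.pow_const p).aestronglyMeasurable
  simpa only [integral_zero] using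
    tendsto_integral_of_dominated_convergence _ hmeas (integrable_const _) hbound hpow

theorem rescaled_compactness_general {a b : ℝ} (hab : a < b) {δ : ℕ → ℝ} (hδ0 : ∀ k, 0 < δ k)
    (hδ : Tendsto δ atTop (𝓝 0)) {u : ℕ → ℝ → ℝ} (hPC : ∀ k, IsPC (δ k) (u k)) {E C : ℝ}
    (henergy : ∀ k, gridEnergy (δ k) a b (u k) ≤ E * (δ k * Real.log (δ k)⁻¹))
    (hC : ∀ k, ∀ x ∈ Ioo a b, |u k x| ≤ C) :
    ∃ φ : ℕ → ℕ, StrictMono φ ∧ ∃ v : ℝ → ℝ, IsStep a b v ∧ ∀ p : ℝ, 0 < p →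
      Tendsto (fun h => ∫ x in Ioo a b, |u (φ h) x - v x| ^ p) atTop (𝓝 0) := by
  obtain ⟨M, hM⟩ := exists_nat_ge E
  have hε : Tendsto (fun k => √(δ k) * (b - a + δ k + 2 * E * Real.log (δ k)⁻¹)) atTop (𝓝 0) :=
    (tendsto_sqrt_mul_add_log_inv (b - a) (2 * E)).comp
      (tendsto_nhdsWithin_iff.2 ⟨hδ, Eventually.of_forall hδ0⟩)
  obtain ⟨φ, hφ, c, t, J, hlim⟩ := exists_subseq_tendsto_stepFun hε <| by
    filter_upwards [hδ.eventually_lt_const one_pos] with k hk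
    exact (hPC k).exists_stepFun_near hab (hδ0 k) hk hM (henergy k) (hC k)
  refine ⟨φ, hφ, stepFun Finset.univ c t J, isStep_stepFun a b _ c t J, fun p hp => ?_⟩
  have hnotin : ∀ᵐ x, x ∉ range t := compl_mem_ae_iff.2 ((finite_range t).measure_zero volume)
  simpa only [Real.norm_eq_abs] using tendsto_integral_norm_sub_rpow hp
    (fun h => ((hPC (φ h)).measurable (hδ0 (φ h))).aestronglyMeasurable)
    (fun h => ae_restrict_of_forall_mem measurableSet_Ioo (hC (φ h)))
    ((ae_restrict_iff' measurableSet_Ioo).2 (hnotin.mono fun x hxt hx => hlim x ⟨hx, hxt⟩))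

/-! ### The scaling of `δ(n)` and `ω(n)` -/

lemma omg_pow_three (n : ℕ) : omg n ^ 3 = Real.log n / n := by
  have hnonneg : 0 ≤ Real.log n / n := div_nonneg (Real.log_natCast_nonneg n) n.cast_nonneg
  rw [omg, one_div]
  exact_mod_cast Real.rpow_inv_natCast_pow hnonneg three_ne_zero

lemma omg_pos {n : ℕ} (hn : 2 ≤ n) : 0 < omg n := by
  have hn1 : (1 : ℝ) < n := by exact_mod_cast hn
  exact Real.rpow_pos_of_pos (div_pos (Real.log_pos hn1) (by linarith)) _

lemma dlt_pos {n : ℕ} (hn : 2 ≤ n) : 0 < dlt n :=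
  one_div_pos.2 (mul_pos (Nat.cast_pos.2 (by omega)) (omg_pos hn))

lemma dlt_mul_log {n : ℕ} (hn : 2 ≤ n) : dlt n * Real.log n = omg n ^ 2 := by
  have hn0 : (n : ℝ) ≠ 0 := Nat.cast_ne_zero.2 (by omega)
  have hlog : Real.log n = n * omg n ^ 3 := by rw [omg_pow_three, mul_div_cancel₀ _ hn0]
  have homg := (omg_pos hn).ne'
  rw [dlt, hlog]
  field_simp

lemma dlt_pow_three_le {n : ℕ} (hn : 2 ≤ n) : dlt n ^ 3 ≤ (n : ℝ)⁻¹ := by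
  have hn0 : (2 : ℝ) ≤ n := by exact_mod_cast hn
  have hlog : (n : ℝ)⁻¹ ≤ Real.log n := by
    refine le_trans ?_ (Real.one_sub_inv_le_log_of_pos (by linarith))
    linarith [inv_anti₀ two_pos hn0]
  have hcube : (n * omg n) ^ 3 = n ^ 2 * Real.log n := by
    rw [mul_pow, omg_pow_three]
    field_simp
  rw [dlt, one_div, inv_pow, hcube]
  refine inv_anti₀ (by linarith) ?_
  calc (n : ℝ) = n ^ 2 * (n : ℝ)⁻¹ := by field_simp
    _ ≤ n ^ 2 * Real.log n := by gcongr

lemma log_le_three_mul_log_inv_dlt {n : ℕ} (hn : 2 ≤ n) :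
    Real.log n ≤ 3 * Real.log (dlt n)⁻¹ := by
  have hle := Real.log_le_log (pow_pos (dlt_pos hn) 3) (dlt_pow_three_le hn)
  rw [Real.log_pow, Real.log_inv] at hle
  rw [Real.log_inv]
  push_cast at hle
  linarith

lemma tendsto_dlt : Tendsto dlt atTop (𝓝 0) := by
  have hcube : Tendsto (fun n => dlt n ^ 3) atTop (𝓝 0) := by
    refine squeeze_zero' ?_ ?_ tendsto_inv_atTop_nhds_zero_nat
    · filter_upwards [eventually_ge_atTop 2] with n hn using pow_nonneg (dlt_pos hn).le 3
    · filter_upwards [eventually_ge_atTop 2] with n hn using dlt_pow_three_le hn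
  have hroot := hcube.rpow_const (p := ((3 : ℕ) : ℝ)⁻¹) (Or.inr (by positivity))
  rw [Real.zero_rpow (by norm_num)] at hroot
  refine hroot.congr' ?_
  filter_upwards [eventually_ge_atTop 2] with n hn
  exact Real.pow_rpow_inv_natCast (dlt_pos hn).le three_ne_zero

lemma gridEnergy_le_of_RDPM_le {n : ℕ} (hn : 2 ≤ n) {a b C : ℝ} (hC : 0 ≤ C) {u : ℝ → ℝ}
    (hE : RDPM n a b u ≤ C) :
    gridEnergy (dlt n) a b u ≤ 3 * C * (dlt n * Real.log (dlt n)⁻¹) := by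
  have hδ := dlt_pos hn
  have hscaled : gridEnergy (dlt n) a b u ≤ C * omg n ^ 2 := by
    rwa [← div_le_iff₀ (pow_pos (omg_pos hn) 2), div_eq_inv_mul, ← one_div]
  calc gridEnergy (dlt n) a b u ≤ C * (dlt n * Real.log n) := by rwa [dlt_mul_log hn]
    _ ≤ C * (dlt n * (3 * Real.log (dlt n)⁻¹)) := by
        gcongr
        exact log_le_three_mul_log_inv_dlt hn
    _ = 3 * C * (dlt n * Real.log (dlt n)⁻¹) := by ring

/-- Compactness for the rescaled discrete Perona–Malik functional:
equibounded energy and `L^∞` norm imply relative compactness in `L^p((a,b))`, with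
limit points that are step functions. -/
theorem rescaled_compactness
    (a b : ℝ) (hab : a < b) (p : ℝ) (hp : 1 ≤ p)
    (nk : ℕ → ℕ) (hnk2 : ∀ k, 2 ≤ nk k) (hnk : Tendsto nk atTop atTop)
    (u : ℕ → ℝ → ℝ) (hPC : ∀ k, IsPC (dlt (nk k)) (u k))
    (C : ℝ)
    (hbound : ∀ k, RDPM (nk k) a b (u k) ≤ C ∧
      ∀ x ∈ Set.Icc (lowGrid (dlt (nk k)) a) (highGrid (dlt (nk k)) b), |u k x| ≤ C) :
    ∃ φ : ℕ → ℕ, StrictMono φ ∧ ∃ uinf : ℝ → ℝ, IsStep a b uinf ∧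
      Tendsto (fun h => ∫ x in Set.Ioo a b, |u (φ h) x - uinf x| ^ p) atTop (nhds 0) := by
  have hδ : ∀ k, 0 < dlt (nk k) := fun k => dlt_pos (hnk2 k)
  obtain ⟨φ, hφ, v, hv, hlim⟩ := rescaled_compactness_general hab hδ (tendsto_dlt.comp hnk) hPC
    (fun k => gridEnergy_le_of_RDPM_le (hnk2 k) (abs_nonneg C) ((hbound k).1.trans (le_abs_self C)))
    (fun k x hx => (hbound k).2 x (Ioo_subset_Icc_grid (hδ k) a b hx))
  exact ⟨φ, hφ, v, hv, hlim p (by linarith)⟩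

end PeronaMalik
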